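/- Let m ≥ 1, let l = 2, let 0 ≤ s ≤ 2m-1, and set d = (2^{4m}-1)/(2^m+1) + 2^s; assume gcd(d, 2^{4m}-1) = 1. Let σ be the multiplicative inverse of 2^s modulo 2^{4m}-1 and set u = gcd(d·σ + 1, 2^m+1). If u < 2^m + 1, then S_d(1) ≥ 2^{2m+1}. -/

import Mathlib

noncomputable instance (p n : ℕ) [Fact p.Prime] : Fintype (GaloisField p n) :=
  Fintype.ofFinite _

/-- The Weil sum `S_d(z) = ∑_{x ∈ GF(2^n)} (-1)^{Tr(zx + x^d)}`, where `Tr` is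
the absolute trace from `GF(2^n)` to `GF(2)`. -/
noncomputable def binaryWeilSum (n d : ℕ) (z : GaloisField 2 n) : ℤ :=
  ∑ x : GaloisField 2 n,
    (-1 : ℤ) ^ (Algebra.trace (ZMod 2) (GaloisField 2 n) (z * x + x ^ d)).val

open Finset

section WeilAux

variable {F : Type*} [Field F] [Fintype F] [DecidableEq F]

set_option linter.unusedSectionVars false
set_option linter.unusedDecidableInType false

/-- The quadratic exponential sum attached to `ψ`. -/
def quadSum (ψ : F → ℤ) (q : ℕ) (a : F) : ℤ := ∑ y : F, ψ (a * y ^ (q + 1))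

/-- Basic properties of the canonical additive character in characteristic two. -/
structure GoodChar (ψ : F → ℤ) : Prop where
  add : ∀ x y, ψ (x + y) = ψ x * ψ y
  zero : ψ 0 = 1
  le_one : ∀ x, ψ x ≤ 1
  frob : ∀ x, ψ (x ^ 2) = ψ x
  orth : ∀ c : F, c ≠ 0 → ∑ y : F, ψ (c * y) = 0

lemma GoodChar.frob_pow {ψ : F → ℤ} (h : GoodChar ψ) (k : ℕ) (x : F) : ψ (x ^ (2 ^ k)) = ψ x := by
  induction k with
  | zero => simp
  | succ k ih => rw [pow_succ, pow_mul, h.frob, ih]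

lemma card_pow_one (n : ℕ) :
    (#{g : Fˣ | g ^ n = 1} : ℕ) = (Fintype.card F - 1).gcd n := by
  have h := IsCyclic.card_powMonoidHom_ker (G := Fˣ) n
  rw [Nat.card_eq_fintype_card (α := Fˣ), Fintype.card_units] at h
  rw [← h, Nat.card_eq_fintype_card, ← Fintype.card_subtype]
  apply Fintype.card_congr
  exact Equiv.subtypeEquivRight (fun x => by simp [MonoidHom.mem_ker])

lemma sum_units (f : F → ℤ) : ∑ x : F, f x = f 0 + ∑ g : Fˣ, f g := by
  rw [Fintype.sum_eq_add_sum_compl (0 : F)]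
  congr 1
  symm
  apply Finset.sum_bij (fun (g : Fˣ) _ => (g : F))
  · intro g _; simp
  · intro a _ b _ h; exact Units.ext h
  · intro b hb
    have hb' : b ≠ 0 := by simpa using hb
    exact ⟨Units.mk0 b hb', by simp, rfl⟩
  · intros; rfl

lemma quad_mod (ψ : F → ℤ) (h0 : ψ 0 = 1) (n : ℕ) (hdvd : n ∣ Fintype.card F - 1) (hn : 0 < n)
    (a : F) : (n : ℤ) ∣ ∑ y : F, ψ (a * y ^ n) - 1 := by
  rw [sum_units]
  have : ψ (a * 0 ^ n) = 1 := by rw [zero_pow hn.ne', mul_zero, h0]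
  rw [this, add_sub_cancel_left]
  rw [← Finset.sum_fiberwise_of_maps_to (s := univ) (t := univ) (g := fun y : Fˣ => y ^ n)
    (fun _ _ => mem_univ _)]
  apply Finset.dvd_sum
  intro z _
  have : ∀ y ∈ ({y : Fˣ | y ^ n = z} : Finset Fˣ), ψ (a * ((y : Fˣ) : F) ^ n) = ψ (a * z) := by
    intro y hy
    simp only [mem_filter, mem_univ, true_and] at hy
    rw [← hy]; simp
  rw [Finset.sum_congr rfl this, Finset.sum_const, nsmul_eq_mul]
  apply Dvd.dvd.mul_right
  rcases Finset.eq_empty_or_nonempty ({y : Fˣ | y ^ n = z} : Finset Fˣ) with he | ⟨y, hy⟩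
  · rw [he]; simp
  · simp only [mem_filter, mem_univ, true_and] at hy
    have h2 := MonoidHom.card_fiber_eq_of_mem_range (powMonoidHom n : Fˣ →* Fˣ)
      (x := z) (y := 1) ⟨y, hy⟩ ⟨1, by simp⟩
    simp only [powMonoidHom_apply] at h2
    rw [h2, card_pow_one, Nat.gcd_eq_right hdvd]

variable [CharP F 2]

lemma frobq (m : ℕ) (x y : F) : (x + y) ^ (2 ^ m) = x ^ (2 ^ m) + y ^ (2 ^ m) :=
  add_pow_char_pow x y 2 m

lemma bil (ψ : F → ℤ) (h : GoodChar ψ) (m : ℕ) (hc : Fintype.card F = (2 ^ m) ^ 4)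
    (a w : F) :
    ∑ y : F, ψ (a * (y ^ (2 ^ m) * w + y * w ^ (2 ^ m))) =
      ∑ y : F, ψ (((a * w) ^ ((2 ^ m) ^ 3) + a * w ^ (2 ^ m)) * y) := by
  apply Finset.sum_congr rfl
  intro y _
  rw [mul_add, h.add, add_mul, h.add]
  congr 1
  · rw [← h.frob_pow (m * 3)]
    congr 1
    rw [show a * (y ^ 2 ^ m * w) = (a * w) * y ^ 2 ^ m by ring, mul_pow, ← pow_mul,
      show 2 ^ m * 2 ^ (m * 3) = Fintype.card F by rw [hc]; ring, FiniteField.pow_card, pow_mul]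
  · congr 1; ring

lemma rad (m : ℕ) (hc : Fintype.card F = (2 ^ m) ^ 4)
    (a w : F) (hw : w ≠ 0) (ha : a ≠ 0)
    (h : (a * w) ^ ((2 ^ m) ^ 3) + a * w ^ (2 ^ m) = 0) :
    a ^ (2 ^ m - 1) * w ^ ((2 ^ m) ^ 2 - 1) = 1 := by
  have h1 : ((a * w) ^ ((2 ^ m) ^ 3) + a * w ^ (2 ^ m)) ^ 2 ^ m = 0 := by
    rw [h]; exact zero_pow (by positivity)
  rw [frobq, ← pow_mul, show (2 ^ m) ^ 3 * 2 ^ m = Fintype.card F by rw [hc]; ring,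
    FiniteField.pow_card, mul_pow, ← pow_mul] at h1
  have h2 : a * w = a ^ 2 ^ m * w ^ (2 ^ m * 2 ^ m) := CharTwo.add_eq_zero.mp h1
  have hq : 1 ≤ 2 ^ m := Nat.one_le_two_pow
  have hq2 : 1 ≤ (2 ^ m) ^ 2 := Nat.one_le_pow _ _ hq
  have e1 : a ^ 2 ^ m = a ^ (2 ^ m - 1) * a := by rw [← pow_succ]; congr 1; omega
  have e2 : w ^ (2 ^ m * 2 ^ m) = w ^ ((2 ^ m) ^ 2 - 1) * w := by
    rw [← pow_succ]; congr 1; rw [← sq]; omega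
  rw [e1, e2] at h2
  have h3 : a * w ≠ 0 := mul_ne_zero ha hw
  apply mul_right_cancel₀ h3
  rw [one_mul]; linear_combination -h2

lemma quad_sq (ψ : F → ℤ) (h : GoodChar ψ) (m : ℕ) (a : F) :
    quadSum ψ (2 ^ m) a ^ 2 = ∑ w : F, ψ (a * w ^ (2 ^ m + 1)) *
      ∑ y : F, ψ (a * (y ^ (2 ^ m) * w + y * w ^ (2 ^ m))) := by
  have h1 : ∀ y : F, quadSum ψ (2 ^ m) a = ∑ w : F, ψ (a * (y + w) ^ (2 ^ m + 1)) := fun y =>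
    (Fintype.sum_equiv (Equiv.addLeft y) _ _ (fun w => by simp)).symm
  rw [sq]
  nth_rewrite 1 [quadSum]
  rw [Finset.sum_mul]
  calc _ = ∑ y : F, ∑ w : F, ψ (a * y ^ (2 ^ m + 1)) * ψ (a * (y + w) ^ (2 ^ m + 1)) := by
        apply Finset.sum_congr rfl
        intro y _
        rw [h1 y, Finset.mul_sum]
    _ = _ := by
        rw [Finset.sum_comm]
        apply Finset.sum_congr rfl
        intro w _
        rw [Finset.mul_sum]
        apply Finset.sum_congr rfl
        intro y _
        rw [← h.add, ← h.add]
        congr 1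
        rw [pow_succ (y + w), frobq]
        have := CharTwo.add_self_eq_zero (a * y ^ (2 ^ m + 1))
        linear_combination this

lemma quad_generic (ψ : F → ℤ) (h : GoodChar ψ) (m : ℕ) (hm : 1 ≤ m)
    (hc : Fintype.card F = (2 ^ m) ^ 4) (a : F) (ha : a ≠ 0)
    (hK : a ^ ((2 ^ m - 1) * ((2 ^ m) ^ 2 + 1)) ≠ 1) :
    quadSum ψ (2 ^ m) a = (2 ^ m) ^ 2 := by
  have hq : 2 ≤ 2 ^ m := by
    calc 2 = 2 ^ 1 := rfl
      _ ≤ 2 ^ m := Nat.pow_le_pow_right (by norm_num) hm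
  have hsq : quadSum ψ (2 ^ m) a ^ 2 = ((2 ^ m) ^ 2) ^ 2 := by
    rw [quad_sq ψ h, Fintype.sum_eq_single 0]
    · simp [h.zero, hc]; ring
    · intro w hw
      rw [bil ψ h m hc, h.orth, mul_zero]
      intro h0
      have h1 := rad m hc a w hw ha h0
      apply hK
      obtain ⟨r, hr⟩ : ∃ r, 2 ^ m = r + 1 := ⟨2 ^ m - 1, by omega⟩
      have e : (2 ^ m) ^ 2 - 1 = (2 ^ m - 1) * (2 ^ m + 1) := by
        rw [hr]; simp; rw [Nat.sub_eq_iff_eq_add (by nlinarith)]; ring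
      have hw1 : w ^ (((2 ^ m) ^ 2 - 1) * ((2 ^ m) ^ 2 + 1)) = 1 := by
        have := FiniteField.pow_card_sub_one_eq_one w hw
        rw [hc] at this
        rw [← this]; congr 1
        rw [hr, Nat.sub_mul]
        have : (r+1)^2 * ((r+1)^2+1) - 1 * ((r+1)^2+1) = (r+1)^4 - 1 := by
          have : (r+1)^2 * ((r+1)^2+1) = (r+1)^4 + (r+1)^2 := by ring
          omega
        exact this
      have h2 := congrArg (· ^ ((2 ^ m) ^ 2 + 1)) h1
      rw [mul_pow, one_pow, ← pow_mul a, ← pow_mul w, hw1, mul_one] at h2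
      exact h2
  rcases sq_eq_sq_iff_eq_or_eq_neg.mp hsq with h1 | h1
  · exact h1
  · exfalso
    have hdv : (2 ^ m + 1) ∣ Fintype.card F - 1 := by
      rw [hc]
      obtain ⟨r, hr⟩ : ∃ r, 2 ^ m = r + 1 := ⟨2 ^ m - 1, by omega⟩
      rw [hr]
      refine ⟨r * ((r+1)^2+1), ?_⟩
      rw [Nat.sub_eq_iff_eq_add (Nat.one_le_pow _ _ (by omega))]; ring
    have h2 := quad_mod ψ h.zero (2 ^ m + 1) hdv (by positivity) a
    change _ ∣ quadSum ψ (2 ^ m) a - 1 at h2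
    rw [h1] at h2
    push_cast at h2
    have h3 : ((2:ℤ) ^ m + 1) ∣ 2 := by
      have : (2:ℤ) = -(-(2 ^ m) ^ 2 - 1) - (2 ^ m + 1) * (2 ^ m - 1) := by ring
      have h5 : ((2:ℤ) ^ m + 1) ∣ -(-(2 ^ m) ^ 2 - 1) - (2 ^ m + 1) * (2 ^ m - 1) :=
        dvd_sub (h2.neg_right) (dvd_mul_right _ _)
      rwa [← this] at h5
    have h4 := Int.le_of_dvd (by norm_num) h3
    have : (2:ℤ) ≤ 2 ^ m := by exact_mod_cast hq
    omega

lemma quad_lower (ψ : F → ℤ) (h : GoodChar ψ) (m : ℕ)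
    (hc : Fintype.card F = (2 ^ m) ^ 4) (a : F) (ha : a ≠ 0) :
    -(2 ^ m) ^ 3 ≤ quadSum ψ (2 ^ m) a := by
  have hq : 1 ≤ 2 ^ m := Nat.one_le_two_pow
  have hsq : quadSum ψ (2 ^ m) a ^ 2 ≤ ((2 ^ m) ^ 3) ^ 2 := by
    rw [quad_sq ψ h]
    set R : Finset F := univ.filter (fun w => (a * w) ^ ((2 ^ m) ^ 3) + a * w ^ (2 ^ m) = 0) with hR
    have hcard : #R ≤ (2 ^ m) ^ 2 := by
      have hsub : R ⊆ insert 0 (Polynomial.nthRoots ((2 ^ m) ^ 2 - 1)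
          (a ^ (2 ^ m - 1))⁻¹).toFinset := by
        intro w hw
        by_cases hw0 : w = 0
        · simp [hw0]
        · have h1 := rad m hc a w hw0 ha (by simpa [hR] using hw)
          have hn : 0 < (2 ^ m) ^ 2 - 1 := by
            by_contra hcon
            have h2 : (2 ^ m) ^ 2 ≤ 1 := by omega
            have h3 : 2 ^ m = 1 := by nlinarith
            have := Fintype.one_lt_card (α := F)
            rw [hc, h3] at this
            simp at this
          simp only [mem_insert, hw0, Multiset.mem_toFinset, Polynomial.mem_nthRoots hn, false_or]
          exact eq_inv_of_mul_eq_one_right h1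
      have h2 := card_le_card hsub
      have h3 := card_insert_le 0 (Polynomial.nthRoots ((2 ^ m) ^ 2 - 1)
          (a ^ (2 ^ m - 1))⁻¹).toFinset
      have h4 := Multiset.toFinset_card_le (Polynomial.nthRoots ((2 ^ m) ^ 2 - 1)
          (a ^ (2 ^ m - 1))⁻¹)
      have h5 := Polynomial.card_nthRoots ((2 ^ m) ^ 2 - 1) (a ^ (2 ^ m - 1))⁻¹
      have : 1 ≤ (2 ^ m) ^ 2 := Nat.one_le_pow _ _ hq
      omega
    calc _ ≤ ∑ w : F, if w ∈ R then ((2:ℤ) ^ m) ^ 4 else 0 := by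
          apply Finset.sum_le_sum
          intro w _
          rw [bil ψ h m hc]
          split_ifs with hw
          · have : (a * w) ^ ((2 ^ m) ^ 3) + a * w ^ (2 ^ m) = 0 := by simpa [hR] using hw
            rw [this]
            simp only [zero_mul, h.zero, sum_const, card_univ, hc, nsmul_eq_mul]
            push_cast
            have := h.le_one (a * w ^ (2 ^ m + 1))
            have hp : (0:ℤ) < (2 ^ m) ^ 4 := by positivity
            nlinarith
          · rw [h.orth, mul_zero]
            intro h0; apply hw; simp [hR, h0]
      _ = #R * (2 ^ m) ^ 4 := by
          rw [← Finset.sum_filter]; simp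
      _ ≤ (2 ^ m) ^ 2 * (2 ^ m) ^ 4 := by
          apply mul_le_mul_of_nonneg_right _ (by positivity)
          exact_mod_cast hcard
      _ = _ := by ring
  have := abs_le_of_sq_le_sq' hsq (by positivity)
  exact this.1


lemma card_fact (q : ℕ) (hq : 1 ≤ q) : q ^ 4 - 1 = (q - 1) * (q ^ 2 + 1) * (q + 1) := by
  obtain ⟨r, rfl⟩ : ∃ r, q = r + 1 := ⟨q - 1, by omega⟩
  rw [Nat.sub_eq_iff_eq_add (Nat.one_le_pow _ _ (by omega))]
  simp; ring

lemma shift_pow (m : ℕ) (t : F) (ht : t ^ (2 ^ m + 1) = 1) :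
    (1 + t) ^ ((2 ^ m - 1) * ((2 ^ m) ^ 2 + 1)) * t ^ 2 = 1 ∨ t = 1 := by
  by_cases h1 : t = 1
  · exact Or.inr h1
  left
  have hq : 1 ≤ 2 ^ m := Nat.one_le_two_pow
  have hne : 1 + t ≠ 0 := fun h => h1 (CharTwo.add_eq_zero.mp h).symm
  have e : (1 + t) ^ (2 ^ m - 1) * t = 1 := by
    apply mul_right_cancel₀ hne
    have : (1 + t) ^ (2 ^ m - 1) * (1 + t) = (1 + t) ^ (2 ^ m) := by
      rw [← pow_succ]; congr 1; omega
    rw [mul_right_comm, this, frobq, one_pow, one_mul]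
    rw [pow_succ] at ht
    linear_combination ht
  have e2 : t ^ ((2 ^ m) ^ 2 + 1) = t ^ 2 := by
    obtain ⟨r, hr⟩ : ∃ r, 2 ^ m = r + 1 := ⟨2 ^ m - 1, by omega⟩
    rw [hr] at ht ⊢
    rw [show (r + 1) ^ 2 + 1 = (r + 1 + 1) * r + 2 by ring, pow_add, pow_mul, ht]; simp
  have := congrArg (· ^ ((2 ^ m) ^ 2 + 1)) e
  rwa [mul_pow, one_pow, ← pow_mul, e2] at this

lemma term_bound (ψ : F → ℤ) (h : GoodChar ψ) (m : ℕ) (hm : 1 ≤ m)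
    (hc : Fintype.card F = (2 ^ m) ^ 4) (s σ D : ℕ)
    (hD : D = (2 ^ m - 1) * ((2 ^ m) ^ 2 + 1)) (hσ0 : 1 ≤ σ)
    (hσ : ∀ g : Fˣ, g ^ (2 ^ s * σ) = g) (g : Fˣ) :
    ((2:ℤ) ^ m) ^ 2 + (if g ^ D = 1 then ((2:ℤ) ^ m) ^ 4 + (2 ^ m) ^ 3 else 0)
      - (if g ^ (D * (2 * σ - 1)) = 1 then ((2:ℤ) ^ m) ^ 3 + (2 ^ m) ^ 2 else 0) ≤
    quadSum ψ (2 ^ m) ((g : F) * (1 + (g : F) ^ (D * σ))) := by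
  by_cases h1 : g ^ D = 1
  · have h2 : (g : F) ^ D = 1 := by rw [← Units.val_pow_eq_pow_val, h1, Units.val_one]
    rw [pow_mul, pow_mul, h1, h2, one_pow, one_pow, CharTwo.add_self_eq_zero, mul_zero]
    simp [quadSum, h.zero, hc]
    linarith
  · rw [if_neg h1]
    have ht1 : (g : F) ^ (D * σ) ≠ 1 := by
      intro h2
      apply h1
      have h3 : g ^ (D * σ) = 1 := by
        apply Units.ext; push_cast; exact h2
      rw [← hσ (g ^ D), ← pow_mul, show D * (2 ^ s * σ) = D * σ * 2 ^ s by ring, pow_mul, h3,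
        one_pow]
    have ha : (g : F) * (1 + (g : F) ^ (D * σ)) ≠ 0 :=
      mul_ne_zero g.ne_zero (fun h => ht1 (CharTwo.add_eq_zero.mp h).symm)
    split_ifs with h2
    · have := quad_lower ψ h m hc _ ha
      linarith
    · rw [quad_generic ψ h m hm hc _ ha]
      · simp
      · rw [← hD]
        intro h3
        apply h2
        have ht : ((g : F) ^ (D * σ)) ^ (2 ^ m + 1) = 1 := by
          have h4 : (g : F) ^ (D * (2 ^ m + 1)) = 1 := by
            rw [hD, ← card_fact _ Nat.one_le_two_pow, ← hc]
            exact FiniteField.pow_card_sub_one_eq_one _ g.ne_zero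
          rw [← pow_mul, mul_right_comm, pow_mul, h4, one_pow]
        rcases shift_pow m _ ht with h5 | h5
        · rw [← hD] at h5
          rw [mul_pow] at h3
          have h6 : (g : F) ^ D = ((g : F) ^ (D * σ)) ^ 2 := by
            linear_combination (-((g : F) ^ D)) * h5 + ((g : F) ^ (D * σ)) ^ 2 * h3
          apply Units.ext
          push_cast
          have h7 : (g : F) ^ D ≠ 0 := pow_ne_zero _ g.ne_zero
          apply mul_right_cancel₀ h7
          rw [one_mul, ← pow_add]
          rw [← pow_mul] at h6
          rw [show D * (2 * σ - 1) + D = D * σ * 2 by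
            obtain ⟨k, rfl⟩ : ∃ k, σ = k + 1 := ⟨σ - 1, by omega⟩
            rw [show 2 * (k + 1) - 1 = 2 * k + 1 by omega]; ring]
          exact h6.symm
        · exact absurd h5 ht1

lemma main_generic (ψ : F → ℤ) (h : GoodChar ψ) (m : ℕ) (hm : 1 ≤ m)
    (hc : Fintype.card F = (2 ^ m) ^ 4) (s σ D : ℕ)
    (hD : D = (2 ^ m - 1) * ((2 ^ m) ^ 2 + 1)) (hσ0 : 1 ≤ σ)
    (hσ : ∀ g : Fˣ, g ^ (2 ^ s * σ) = g) :
    ((2:ℤ) ^ m) ^ 2 * (2 ^ m + 1 - ((2 ^ m + 1).gcd (2 * σ - 1) : ℕ)) ≤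
      ∑ x : F, ψ (x + x ^ (D + 2 ^ s)) := by
  have hq : 2 ≤ 2 ^ m := by
    calc 2 = 2 ^ 1 := rfl
      _ ≤ 2 ^ m := Nat.pow_le_pow_right (by norm_num) hm
  have hDpos : 0 < D := by rw [hD]; exact Nat.mul_pos (by omega) (by positivity)
  have hfact : Fintype.card F - 1 = D * (2 ^ m + 1) := by
    rw [hc, hD, card_fact _ (by omega)]
  have hcu : Fintype.card Fˣ = D * (2 ^ m + 1) := by rw [Fintype.card_units, hfact]
  have step1 : ∀ g : Fˣ, ψ ((g : F) + (g : F) ^ (D + 2 ^ s)) =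
      ψ ((g : F) * (1 + (g : F) ^ (D * σ))) := by
    intro g
    rw [mul_add, mul_one, h.add, h.add]
    congr 1
    rw [← h.frob_pow s ((g : F) * _), mul_pow, ← pow_mul]
    congr 1
    have : (g : F) ^ (D * σ * 2 ^ s) = (g : F) ^ D := by
      have h2 : ((g ^ (2 ^ s * σ) : Fˣ) : F) = g := by rw [hσ g]
      push_cast at h2
      rw [show D * σ * 2 ^ s = 2 ^ s * σ * D by ring, pow_mul, h2]
    rw [this]; ring
  have hS : ∑ x : F, ψ (x + x ^ (D + 2 ^ s)) =
      1 + ∑ g : Fˣ, ψ ((g : F) * (1 + (g : F) ^ (D * σ))) := by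
    rw [sum_units, Finset.sum_congr rfl (fun g _ => step1 g)]
    rw [zero_pow (by positivity), add_zero, h.zero]
  have step2 : ∀ y : Fˣ, ∑ g : Fˣ, ψ ((g : F) * (1 + (g : F) ^ (D * σ))) =
      ∑ g : Fˣ, ψ ((g : F) * (1 + (g : F) ^ (D * σ)) * (y : F) ^ (2 ^ m + 1)) := by
    intro y
    symm
    apply Fintype.sum_equiv (Equiv.mulRight (y ^ (2 ^ m + 1)))
    intro g
    congr 1
    have hy : ((y : F) ^ (2 ^ m + 1)) ^ (D * σ) = 1 := by
      rw [← pow_mul, ← mul_assoc, mul_comm (2 ^ m + 1) D, ← hfact, pow_mul,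
        FiniteField.pow_card_sub_one_eq_one _ y.ne_zero, one_pow]
    simp only [Equiv.coe_mulRight, Units.val_mul, Units.val_pow_eq_pow_val]
    rw [mul_pow, hy]; ring
  have step3 : (D * (2 ^ m + 1) : ℕ) * ∑ x : F, ψ (x + x ^ (D + 2 ^ s)) =
      ∑ g : Fˣ, quadSum ψ (2 ^ m) ((g : F) * (1 + (g : F) ^ (D * σ))) := by
    have h1 : ∀ a : F, quadSum ψ (2 ^ m) a = 1 + ∑ y : Fˣ, ψ (a * (y : F) ^ (2 ^ m + 1)) := by
      intro a
      rw [quadSum, sum_units, zero_pow (by omega), mul_zero, h.zero]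
    rw [Finset.sum_congr rfl (fun g _ => h1 _), Finset.sum_add_distrib, Finset.sum_comm,
      ← Finset.sum_congr rfl (fun y _ => step2 y), hS]
    simp only [sum_const, card_univ, hcu, nsmul_eq_mul]
    ring
  have hb := Finset.sum_le_sum (fun g (_ : g ∈ (univ : Finset Fˣ)) =>
    term_bound ψ h m hm hc s σ D hD hσ0 hσ g)
  rw [← step3, Finset.sum_sub_distrib, Finset.sum_add_distrib, ← Finset.sum_filter,
    ← Finset.sum_filter] at hb
  simp only [sum_const, card_univ, hcu, nsmul_eq_mul, card_pow_one, hfact] at hb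
  rw [Nat.gcd_mul_left, Nat.gcd_mul_right_left] at hb
  set v := (2 ^ m + 1).gcd (2 * σ - 1)
  push_cast at hb
  have hpos : (0:ℤ) < D * (2 ^ m + 1) := by positivity
  apply le_of_mul_le_mul_left _ hpos
  refine le_trans (le_of_eq ?_) hb
  ring

lemma goodChar_trace [Algebra (ZMod 2) F] :
    GoodChar (fun x : F => (-1 : ℤ) ^ (Algebra.trace (ZMod 2) F x).val) := by
  have key : ∀ a b : ZMod 2, (-1 : ℤ) ^ (a + b).val = (-1) ^ a.val * (-1) ^ b.val := by decide
  have key2 : ∀ a : ZMod 2, (-1 : ℤ) ^ a.val ≤ 1 := by decide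
  have key3 : ∀ a : ZMod 2, a ≠ 0 → (-1 : ℤ) ^ a.val = -1 := by decide
  have hadd : ∀ x y : F, (-1 : ℤ) ^ (Algebra.trace (ZMod 2) F (x + y)).val =
    (-1) ^ (Algebra.trace (ZMod 2) F x).val * (-1) ^ (Algebra.trace (ZMod 2) F y).val := by
    intro x y; rw [map_add, key]
  refine ⟨hadd, by simp, fun x => key2 _, ?_, ?_⟩
  · intro x
    have := Algebra.trace_eq_of_algEquiv (FiniteField.frobeniusAlgEquivOfAlgebraic (ZMod 2) F) x
    simp only [FiniteField.coe_frobeniusAlgEquivOfAlgebraic, ZMod.card] at this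
    rw [this]
  · intro c hc
    obtain ⟨b, hb⟩ : ∃ b : F, Algebra.trace (ZMod 2) F (c * b) ≠ 0 := by
      have htr := (traceForm_nondegenerate (ZMod 2) F).1 c
      simp_rw [Algebra.traceForm_apply] at htr
      by_contra! hf
      exact hc (htr hf)
    have h1 : ∑ y : F, (-1 : ℤ) ^ (Algebra.trace (ZMod 2) F (c * y)).val =
        ∑ y : F, (-1 : ℤ) ^ (Algebra.trace (ZMod 2) F (c * (b + y))).val :=
      (Fintype.sum_equiv (Equiv.addLeft b) _ _ (fun w => by simp)).symm
    simp only [mul_add, hadd, key3 _ hb] at h1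
    rw [← Finset.mul_sum] at h1
    linarith

end WeilAux

/-- For `l = 2`, `d = (2^(4m)-1)/(2^m+1) + 2^s` coprime to `2^(4m)-1`, `σ` the
inverse of `2^s` modulo `2^(4m)-1`, and `u = gcd(dσ+1, 2^m+1)`: if `u < 2^m+1`
then `S_d(1) ≥ 2^(2m+1)`. -/
theorem weil_sum_at_one_u_lt (m l s d σ u : ℕ) (hm : 1 ≤ m) (hl : l = 2)
    (hs : s ≤ 2 * m - 1)
    (hd : d = (2 ^ (2 * l * m) - 1) / (2 ^ m + 1) + 2 ^ s)
    (hgcd : Nat.gcd d (2 ^ (2 * l * m) - 1) = 1)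
    (hσ : 2 ^ s * σ ≡ 1 [MOD 2 ^ (2 * l * m) - 1])
    (hu : u = Nat.gcd (d * σ + 1) (2 ^ m + 1)) (hult : u < 2 ^ m + 1) :
    (2 ^ (2 * m + 1) : ℤ) ≤ binaryWeilSum (2 * l * m) d 1 := by
  subst hl
  classical
  have hq : 2 ≤ 2 ^ m := by
    calc 2 = 2 ^ 1 := rfl
      _ ≤ 2 ^ m := Nat.pow_le_pow_right (by norm_num) hm
  have hL : 2 ^ (2 * 2 * m) = (2 ^ m) ^ 4 := by rw [← pow_mul]; congr 1; ring
  have hc : Fintype.card (GaloisField 2 (2 * 2 * m)) = (2 ^ m) ^ 4 := by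
    rw [← hL, ← Nat.card_eq_fintype_card]
    exact GaloisField.card 2 _ (by omega)
  rw [hL] at hd hσ
  have hfact := card_fact (2 ^ m) (by omega)
  rw [hfact, Nat.mul_div_cancel _ (by positivity)] at hd
  obtain ⟨D, hD⟩ : ∃ D, D = (2 ^ m - 1) * ((2 ^ m) ^ 2 + 1) := ⟨_, rfl⟩
  rw [← hD] at hd hfact
  have hDpos : 0 < D := by rw [hD]; exact Nat.mul_pos (by omega) (by positivity)
  have hσ0 : 1 ≤ σ := by
    by_contra hcon
    have h0 : σ = 0 := by omega
    rw [h0, mul_zero, hfact] at hσ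
    have h1 := (Nat.modEq_zero_iff_dvd.mp hσ.symm)
    have := Nat.le_of_dvd one_pos h1
    nlinarith
  have hσu : ∀ g : (GaloisField 2 (2 * 2 * m))ˣ, g ^ (2 ^ s * σ) = g := by
    intro g
    conv_rhs => rw [← pow_one g]
    rw [pow_eq_pow_iff_modEq]
    apply hσ.of_dvd
    rw [← hc, ← Fintype.card_units]
    exact orderOf_dvd_card
  have hmain := main_generic _ (goodChar_trace (F := GaloisField 2 (2 * 2 * m))) m hm hc s σ D hD
    hσ0 hσu
  rw [← hd] at hmain
  have hW : binaryWeilSum (2 * 2 * m) d 1 = ∑ x : GaloisField 2 (2 * 2 * m),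
      (-1 : ℤ) ^ (Algebra.trace (ZMod 2) (GaloisField 2 (2 * 2 * m)) (x + x ^ d)).val := by
    simp only [binaryWeilSum, one_mul]
  rw [hW]
  refine le_trans ?_ hmain
  obtain ⟨v, hv⟩ : ∃ v, v = (2 ^ m + 1).gcd (2 * σ - 1) := ⟨_, rfl⟩
  rw [← hv]
  have hvd : v ∣ 2 ^ m + 1 := hv ▸ Nat.gcd_dvd_left _ _
  have hvne : v ≠ 2 ^ m + 1 := by
    intro he
    have h1 : (2 ^ m + 1) ∣ 2 * σ - 1 := by
      have := Nat.gcd_dvd_right (2 ^ m + 1) (2 * σ - 1)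
      rwa [← hv, he] at this
    have h2 : ((2:ℤ) ^ m + 1) ∣ 2 * σ - 1 := by
      have := Int.natCast_dvd_natCast.mpr h1
      rw [Nat.cast_sub (by omega)] at this
      push_cast at this
      exact this
    have h3 : ((2:ℤ) ^ m + 1) ∣ 2 ^ s * σ - 1 := by
      have h4 : 2 ^ s * σ ≡ 1 [MOD 2 ^ m + 1] := hσ.of_dvd (by rw [hfact]; exact dvd_mul_left _ _)
      have := (Nat.modEq_iff_dvd.mp h4.symm)
      push_cast at this
      exact this
    have hDz : (D : ℤ) = (2 ^ m - 1) * ((2 ^ m) ^ 2 + 1) := by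
      rw [hD]; push_cast [Nat.cast_sub (show 1 ≤ 2 ^ m by omega)]; ring
    have h5 : ((2:ℤ) ^ m + 1) ∣ d * σ + 1 := by
      have : (d * σ + 1 : ℤ) = -2 * (2 * σ - 1) + (2 ^ m + 1) * (((2 ^ m) ^ 2 - 2 * 2 ^ m + 3) * σ)
          + (2 ^ s * σ - 1) := by
        rw [hd]; push_cast; rw [hDz]; ring
      rw [this]
      exact dvd_add (dvd_add (h2.mul_left _) (dvd_mul_right _ _)) h3
    have h6 : (2 ^ m + 1) ∣ d * σ + 1 := by exact_mod_cast h5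
    rw [Nat.gcd_eq_right h6] at hu
    omega
  have hvle : v + 2 ≤ 2 ^ m + 1 := by
    obtain ⟨k, hk⟩ := hvd
    have hk2 : 2 ≤ k := by
      rcases k with _ | _ | k
      · omega
      · omega
      · omega
    nlinarith
  have hvz : (v : ℤ) + 2 ≤ 2 ^ m + 1 := by exact_mod_cast hvle
  have : (2:ℤ) ^ (2 * m + 1) = (2 ^ m) ^ 2 * 2 := by rw [← pow_mul, pow_succ]; ring
  rw [this]
  apply mul_le_mul_of_nonneg_left _ (by positivity)
  linarith
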